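/- Let 0 < p ≤ q < ∞ and let f be a measurable function on [0,1]². Then (∫₀¹(∫₀¹ |f(x₁,x₂)|^p dx₂)^{q/p} dx₁)^{1/q} ≤ (∫₀¹(∫₀¹ (f^{*₁}(t₁,x₂))^p dx₂)^{q/p} dt₁)^{1/q}. -/

import Mathlib

open MeasureTheory Set

/-- The decreasing rearrangement on `[0,1]` (with Lebesgue measure) of a measurable
function `g`: `g^*(t) = inf {σ ≥ 0 : |{x ∈ [0,1] : |g(x)| > σ}| ≤ t}`. -/
noncomputable def rearr (g : ℝ → ℝ) (t : ℝ) : ℝ :=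
  sInf {σ : ℝ | 0 ≤ σ ∧ volume {x ∈ Icc (0:ℝ) 1 | σ < |g x|} ≤ ENNReal.ofReal t}

/-- The rearrangement of `x₁ ↦ f (x₁, x₂)` in the first variable, the second one fixed. -/
noncomputable def rearr1 (f : ℝ → ℝ → ℝ) (t₁ x₂ : ℝ) : ℝ :=
  rearr (fun x₁ => f x₁ x₂) t₁

/-!
Replacing `f` by `|f| ^ p` reduces the claim to `p = 1` and `r = q / p ≥ 1`. To bound the
`L^r` norm of `x ↦ ∫ f x y dy`, test it against powers `g ^ (1 - 1 / r)`. By Tonelli and, for each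
fixed `y`, the Hardy–Littlewood inequality `∫ u v ≤ ∫ u^* v^*`, the pairing only increases when
`f (·, y)` and `g` are rearranged. Hölder's inequality then splits off `∫ g^* = ∫ g`, and what is
left is the `L^r` norm of `t ↦ ∫ f (·, y)^* (t) dy`.
-/

open scoped ENNReal

variable {α β : Type*} [MeasurableSpace α] [MeasurableSpace β] {μ : Measure α} {ν : Measure β}

section LayerCake

lemma volume_Ioi_zero_ofReal_lt (m : ℝ≥0∞) :
    volume.restrict (Ioi 0) {t : ℝ | ENNReal.ofReal t < m} = m := by
  rw [Measure.restrict_apply' measurableSet_Ioi]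
  induction m with
  | top => simp [Real.volume_Ioi]
  | coe m =>
    have interval_eq : {t : ℝ | ENNReal.ofReal t < m} ∩ Ioi 0 = Ioo 0 (m : ℝ) := by
      ext t
      simp only [mem_inter_iff, mem_ofPred_eq, mem_Ioi, mem_Ioo, and_comm (b := 0 < t)]
      exact and_congr_right fun ht => ENNReal.ofReal_lt_iff_lt_toReal ht.le ENNReal.coe_ne_top
    rw [interval_eq, Real.volume_Ioo, sub_zero, ENNReal.ofReal_coe_nnreal]

/-- Unlike `lintegral_eq_lintegral_meas_lt`, this allows the value `∞`. -/
lemma lintegral_eq_lintegral_Ioi_measure_lt [SFinite μ] {g : α → ℝ≥0∞} (hg : Measurable g) :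
    ∫⁻ x, g x ∂μ = ∫⁻ σ in Ioi (0 : ℝ), μ {x | ENNReal.ofReal σ < g x} := by
  have subgraph_meas : MeasurableSet {z : α × ℝ | ENNReal.ofReal z.2 < g z.1} :=
    measurableSet_lt measurable_snd.ennreal_ofReal (hg.comp measurable_fst)
  calc ∫⁻ x, g x ∂μ
      = ∫⁻ x, volume.restrict (Ioi 0) {σ : ℝ | ENNReal.ofReal σ < g x} ∂μ := by
        simp only [volume_Ioi_zero_ofReal_lt]
    _ = (μ.prod (volume.restrict (Ioi 0))) {z : α × ℝ | ENNReal.ofReal z.2 < g z.1} :=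
        (Measure.prod_apply subgraph_meas).symm
    _ = ∫⁻ σ in Ioi (0 : ℝ), μ {x | ENNReal.ofReal σ < g x} :=
        Measure.prod_apply_symm subgraph_meas

lemma lintegral_mul_eq_lintegral_Ioi_measure_lt_inter [SFinite μ] {g h : α → ℝ≥0∞}
    (hg : Measurable g) (hh : Measurable h) :
    ∫⁻ x, g x * h x ∂μ = ∫⁻ σ in Ioi (0 : ℝ), ∫⁻ τ in Ioi (0 : ℝ),
      μ ({x | ENNReal.ofReal τ < g x} ∩ {x | ENNReal.ofReal σ < h x}) := by
  calc ∫⁻ x, g x * h x ∂μ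
      = ∫⁻ x, h x ∂μ.withDensity g := (lintegral_withDensity_eq_lintegral_mul μ hg hh).symm
    _ = ∫⁻ σ in Ioi (0 : ℝ), ∫⁻ x in {x | ENNReal.ofReal σ < h x}, g x ∂μ := by
        rw [lintegral_eq_lintegral_Ioi_measure_lt hh]
        simp only [withDensity_apply _ (measurableSet_lt measurable_const hh)]
    _ = _ := by
        simp only [lintegral_eq_lintegral_Ioi_measure_lt hg,
          Measure.restrict_apply (measurableSet_lt measurable_const hg)]

end LayerCake

section DecrRearr

/-- The decreasing rearrangement `g^*(t) = inf {σ : μ {g > σ} ≤ t}` of `g` on a measure space.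
Values lie in `ℝ≥0∞`, so that the infimum is always attained; a negative `t` is read as `0`. -/
noncomputable def decrRearr (μ : Measure α) (g : α → ℝ≥0∞) (t : ℝ) : ℝ≥0∞ :=
  sInf {σ | μ {x | σ < g x} ≤ ENNReal.ofReal t}

lemma decrRearr_le_of_measure_lt_le {g : α → ℝ≥0∞} {t : ℝ} {σ : ℝ≥0∞}
    (h : μ {x | σ < g x} ≤ ENNReal.ofReal t) : decrRearr μ g t ≤ σ :=
  sInf_le h

lemma measure_decrRearr_lt_le (μ : Measure α) (g : α → ℝ≥0∞) (t : ℝ) :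
    μ {x | decrRearr μ g t < g x} ≤ ENNReal.ofReal t := by
  obtain ⟨σ, σ_anti, σ_tendsto, hσ⟩ := exists_seq_tendsto_sInf
    (S := {σ | μ {x | σ < g x} ≤ ENNReal.ofReal t}) ⟨∞, by simp⟩ (OrderBot.bddBelow _)
  have subset_iUnion : {x | decrRearr μ g t < g x} ⊆ ⋃ n, {x | σ n < g x} := fun x hx =>
    mem_iUnion.2 (σ_tendsto.eventually_lt_const hx).exists
  have mono : Monotone fun n => {x | σ n < g x} := fun m n hmn x hx => (σ_anti hmn).trans_lt hx
  calc μ {x | decrRearr μ g t < g x}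
      ≤ μ (⋃ n, {x | σ n < g x}) := measure_mono subset_iUnion
    _ = ⨆ n, μ {x | σ n < g x} := mono.measure_iUnion
    _ ≤ ENNReal.ofReal t := iSup_le hσ

lemma lt_decrRearr_iff {g : α → ℝ≥0∞} {t : ℝ} {σ : ℝ≥0∞} :
    σ < decrRearr μ g t ↔ ENNReal.ofReal t < μ {x | σ < g x} := by
  refine ⟨fun h => lt_of_not_ge fun hle => h.not_ge (decrRearr_le_of_measure_lt_le hle),
    fun h => lt_of_not_ge fun hle => h.not_ge ?_⟩
  exact (measure_mono fun x hx => hle.trans_lt hx).trans (measure_decrRearr_lt_le μ g t)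

lemma decrRearr_comp_le {φ : ℝ≥0∞ → ℝ≥0∞} (hφ : Monotone φ) (g : α → ℝ≥0∞) (t : ℝ) :
    decrRearr μ (fun x => φ (g x)) t ≤ φ (decrRearr μ g t) :=
  decrRearr_le_of_measure_lt_le <|
    (measure_mono fun _ hx => hφ.reflect_lt hx).trans (measure_decrRearr_lt_le μ g t)

lemma decrRearr_eq_zero {g : α → ℝ≥0∞} {t : ℝ} (ht : μ univ ≤ ENNReal.ofReal t) :
    decrRearr μ g t = 0 :=
  le_zero_iff.1 <| decrRearr_le_of_measure_lt_le <| (measure_mono (subset_univ _)).trans ht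

lemma measurable_decrRearr_prod [SFinite μ] {f : α → β → ℝ≥0∞}
    (hf : Measurable (Function.uncurry f)) :
    Measurable fun z : ℝ × β => decrRearr μ (fun x => f x z.2) z.1 := by
  refine measurable_of_Ioi fun σ => ?_
  simp only [preimage, mem_Ioi, lt_decrRearr_iff]
  have measurable_distribution : Measurable fun y => μ {x | σ < f x y} :=
    measurable_measure_prodMk_left (measurableSet_lt measurable_const (hf.comp measurable_swap))
  exact measurableSet_lt measurable_fst.ennreal_ofReal (measurable_distribution.comp measurable_snd)

lemma measurable_decrRearr (μ : Measure α) (g : α → ℝ≥0∞) : Measurable (decrRearr μ g) := by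
  refine measurable_of_Ioi fun σ => ?_
  simp only [preimage, mem_Ioi, lt_decrRearr_iff]
  exact measurableSet_lt ENNReal.measurable_ofReal measurable_const

lemma volume_lt_decrRearr (μ : Measure α) (g : α → ℝ≥0∞) (σ : ℝ≥0∞) :
    volume.restrict (Ioi 0) {t | σ < decrRearr μ g t} = μ {x | σ < g x} := by
  simp only [lt_decrRearr_iff, volume_Ioi_zero_ofReal_lt]

lemma lintegral_decrRearr [SFinite μ] {g : α → ℝ≥0∞} (hg : Measurable g) :
    ∫⁻ t in Ioi (0 : ℝ), decrRearr μ g t = ∫⁻ x, g x ∂μ := by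
  simp only [lintegral_eq_lintegral_Ioi_measure_lt hg,
    lintegral_eq_lintegral_Ioi_measure_lt (measurable_decrRearr μ g), volume_lt_decrRearr]

lemma measure_lt_inter_lt_le_volume_decrRearr (μ : Measure α) (g h : α → ℝ≥0∞) (σ τ : ℝ≥0∞) :
    μ ({x | σ < g x} ∩ {x | τ < h x}) ≤
      volume.restrict (Ioi 0) ({t | σ < decrRearr μ g t} ∩ {t | τ < decrRearr μ h t}) := by
  calc μ ({x | σ < g x} ∩ {x | τ < h x})
      ≤ min (μ {x | σ < g x}) (μ {x | τ < h x}) :=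
        le_min (measure_mono inter_subset_left) (measure_mono inter_subset_right)
    _ = volume.restrict (Ioi 0)
          {t | ENNReal.ofReal t < min (μ {x | σ < g x}) (μ {x | τ < h x})} :=
        (volume_Ioi_zero_ofReal_lt _).symm
    _ = _ := by simp only [lt_min_iff, lt_decrRearr_iff, ofPred_and]

lemma lintegral_mul_le_lintegral_decrRearr_mul [SFinite μ] {g h : α → ℝ≥0∞}
    (hg : Measurable g) (hh : Measurable h) :
    ∫⁻ x, g x * h x ∂μ ≤ ∫⁻ t in Ioi (0 : ℝ), decrRearr μ g t * decrRearr μ h t := by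
  rw [lintegral_mul_eq_lintegral_Ioi_measure_lt_inter hg hh,
    lintegral_mul_eq_lintegral_Ioi_measure_lt_inter (measurable_decrRearr μ g)
      (measurable_decrRearr μ h)]
  gcongr
  exact measure_lt_inter_lt_le_volume_decrRearr μ g h _ _

end DecrRearr

section Duality

lemma exists_lt_lintegral_of_lt_lintegral [SigmaFinite μ] {F : α → ℝ≥0∞} {L : ℝ≥0∞}
    (hL : L < ∫⁻ x, F x ∂μ) :
    ∃ g : α → ℝ≥0∞, Measurable g ∧ (∀ x, g x ≤ F x) ∧ ∫⁻ x, g x ∂μ ≠ ∞ ∧ L < ∫⁻ x, g x ∂μ := by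
  simp only [lintegral_eq_nnreal F, lt_iSup_iff] at hL
  obtain ⟨φ, φ_le, hφ⟩ := hL
  rw [← SimpleFunc.lintegral_eq_lintegral] at hφ
  obtain ⟨ψ, ψ_le, ψ_fin, hψ⟩ := exists_lt_lintegral_simpleFunc_of_lt_lintegral hφ
  exact ⟨fun x => ψ x, ψ.measurable.coe_nnreal_ennreal,
    fun x => (ENNReal.coe_le_coe.2 (ψ_le x)).trans (φ_le x), ψ_fin.ne, hψ⟩

lemma rpow_mul_rpow_one_sub (a : ℝ≥0∞) {θ : ℝ} (hθ₀ : 0 ≤ θ) (hθ₁ : θ ≤ 1) :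
    a ^ θ * a ^ (1 - θ) = a := by
  rw [← ENNReal.rpow_add_of_nonneg _ _ hθ₀ (sub_nonneg.2 hθ₁), add_sub_cancel, ENNReal.rpow_one]

lemma le_of_le_rpow_mul_rpow_one_sub {a c : ℝ≥0∞} {θ : ℝ} (hθ₀ : 0 < θ) (hθ₁ : θ ≤ 1) (ha : a ≠ ∞)
    (h : a ≤ c ^ θ * a ^ (1 - θ)) : a ≤ c := by
  rcases eq_or_ne a 0 with rfl | ha₀
  · exact zero_le
  have cancel : a ^ θ * a ^ (1 - θ) ≤ c ^ θ * a ^ (1 - θ) :=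
    (rpow_mul_rpow_one_sub a hθ₀.le hθ₁).trans_le h
  rwa [ENNReal.mul_le_mul_iff_left (ENNReal.rpow_pos (pos_iff_ne_zero.2 ha₀) ha).ne'
    (ENNReal.rpow_ne_top_of_nonneg (sub_nonneg.2 hθ₁) ha), ENNReal.rpow_le_rpow_iff hθ₀] at cancel

/-- The exponent `1 - r⁻¹` is the reciprocal of the conjugate exponent `r / (r - 1)`, written so
that `r = 1` is included. -/
lemma lintegral_rpow_le_of_forall_lintegral_mul_le [SigmaFinite μ] {r : ℝ} (hr : 1 ≤ r)
    {F : α → ℝ≥0∞} {C : ℝ≥0∞}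
    (h : ∀ g : α → ℝ≥0∞, Measurable g →
      ∫⁻ x, F x * g x ^ (1 - r⁻¹) ∂μ ≤ C ^ r⁻¹ * (∫⁻ x, g x ∂μ) ^ (1 - r⁻¹)) :
    ∫⁻ x, F x ^ r ∂μ ≤ C := by
  have hr₀ : 0 < r := one_pos.trans_le hr
  refine le_of_forall_lt fun L hL => ?_
  obtain ⟨g, g_meas, g_le, g_fin, hg⟩ := exists_lt_lintegral_of_lt_lintegral hL
  have root_le (x : α) : g x ^ r⁻¹ ≤ F x := (ENNReal.rpow_inv_le_iff hr₀).2 (g_le x)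
  refine hg.trans_le <| le_of_le_rpow_mul_rpow_one_sub (inv_pos.2 hr₀) (inv_le_one_of_one_le₀ hr)
    g_fin ?_
  calc ∫⁻ x, g x ∂μ
      = ∫⁻ x, g x ^ r⁻¹ * g x ^ (1 - r⁻¹) ∂μ := by
        simp only [rpow_mul_rpow_one_sub _ (inv_pos.2 hr₀).le (inv_le_one_of_one_le₀ hr)]
    _ ≤ ∫⁻ x, F x * g x ^ (1 - r⁻¹) ∂μ := by gcongr with x; exact root_le x
    _ ≤ C ^ r⁻¹ * (∫⁻ x, g x ∂μ) ^ (1 - r⁻¹) := h g g_meas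

end Duality

section MixedNorm

lemma lintegral_lintegral_mul_right_swap [SFinite μ] [SFinite ν] {f : α → β → ℝ≥0∞} {w : α → ℝ≥0∞}
    (hf : Measurable (Function.uncurry f)) (hw : Measurable w) :
    ∫⁻ x, (∫⁻ y, f x y ∂ν) * w x ∂μ = ∫⁻ y, ∫⁻ x, f x y * w x ∂μ ∂ν := by
  rw [← lintegral_lintegral_swap (hf.mul (hw.comp measurable_fst)).aemeasurable]
  exact lintegral_congr fun x => (lintegral_mul_const _ hf.of_uncurry_left).symm

lemma lintegral_lintegral_rpow_le_decrRearr [SigmaFinite μ] [SFinite ν] {r : ℝ} (hr : 1 ≤ r)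
    {f : α → β → ℝ≥0∞} (hf : Measurable (Function.uncurry f)) :
    ∫⁻ x, (∫⁻ y, f x y ∂ν) ^ r ∂μ ≤
      ∫⁻ t in Ioi (0 : ℝ), (∫⁻ y, decrRearr μ (fun x => f x y) t ∂ν) ^ r := by
  have hr₀ : 0 < r := one_pos.trans_le hr
  have hr' : 0 ≤ 1 - r⁻¹ := sub_nonneg.2 (inv_le_one_of_one_le₀ hr)
  have hf' : Measurable fun z : ℝ × β => decrRearr μ (fun x => f x z.2) z.1 :=
    measurable_decrRearr_prod hf
  refine lintegral_rpow_le_of_forall_lintegral_mul_le hr fun g hg => ?_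
  set F' : ℝ → ℝ≥0∞ := fun t => ∫⁻ y, decrRearr μ (fun x => f x y) t ∂ν
  have hF' : Measurable F' := hf'.lintegral_prod_right'
  calc ∫⁻ x, (∫⁻ y, f x y ∂ν) * g x ^ (1 - r⁻¹) ∂μ
      = ∫⁻ y, ∫⁻ x, f x y * g x ^ (1 - r⁻¹) ∂μ ∂ν :=
        lintegral_lintegral_mul_right_swap hf (hg.pow_const _)
    _ ≤ ∫⁻ y, (∫⁻ t in Ioi (0 : ℝ), decrRearr μ (fun x => f x y) t *
          decrRearr μ (fun x => g x ^ (1 - r⁻¹)) t) ∂ν :=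
        lintegral_mono fun y =>
          lintegral_mul_le_lintegral_decrRearr_mul hf.of_uncurry_right (hg.pow_const _)
    _ ≤ ∫⁻ y, (∫⁻ t in Ioi (0 : ℝ), decrRearr μ (fun x => f x y) t *
          decrRearr μ g t ^ (1 - r⁻¹)) ∂ν := by
        gcongr with y t
        exact decrRearr_comp_le (ENNReal.monotone_rpow_of_nonneg hr') g t
    _ = ∫⁻ t in Ioi (0 : ℝ), F' t * decrRearr μ g t ^ (1 - r⁻¹) :=
        (lintegral_lintegral_mul_right_swap hf' ((measurable_decrRearr μ g).pow_const _)).symm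
    _ = ∫⁻ t in Ioi (0 : ℝ), (F' t ^ r) ^ r⁻¹ * decrRearr μ g t ^ (1 - r⁻¹) := by
        simp only [ENNReal.rpow_rpow_inv hr₀.ne']
    _ ≤ (∫⁻ t in Ioi (0 : ℝ), F' t ^ r) ^ r⁻¹ *
          (∫⁻ t in Ioi (0 : ℝ), decrRearr μ g t) ^ (1 - r⁻¹) :=
        ENNReal.lintegral_mul_norm_pow_le (hF'.pow_const r).aemeasurable
          (measurable_decrRearr μ g).aemeasurable (inv_pos.2 hr₀).le hr' (add_sub_cancel _ _)
    _ = (∫⁻ t in Ioi (0 : ℝ), F' t ^ r) ^ r⁻¹ * (∫⁻ x, g x ∂μ) ^ (1 - r⁻¹) := by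
        rw [lintegral_decrRearr hg]

theorem stmt_3_general [SigmaFinite μ] [SFinite ν] {p q : ℝ} (hp : 0 < p) (hpq : p ≤ q)
    {f : α → β → ℝ≥0∞} (hf : Measurable (Function.uncurry f)) :
    (∫⁻ x, (∫⁻ y, f x y ^ p ∂ν) ^ (q / p) ∂μ) ^ (1 / q) ≤
      (∫⁻ t in Ioi (0 : ℝ), (∫⁻ y, decrRearr μ (fun x => f x y) t ^ p ∂ν) ^ (q / p)) ^ (1 / q) := by
  have hq : 0 < q := hp.trans_le hpq
  gcongr ?_ ^ (1 / q)
  calc ∫⁻ x, (∫⁻ y, f x y ^ p ∂ν) ^ (q / p) ∂μ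
      ≤ ∫⁻ t in Ioi (0 : ℝ), (∫⁻ y, decrRearr μ (fun x => f x y ^ p) t ∂ν) ^ (q / p) :=
        lintegral_lintegral_rpow_le_decrRearr ((one_le_div hp).2 hpq) (hf.pow_const p)
    _ ≤ ∫⁻ t in Ioi (0 : ℝ), (∫⁻ y, decrRearr μ (fun x => f x y) t ^ p ∂ν) ^ (q / p) := by
        gcongr with t y
        exact decrRearr_comp_le (ENNReal.monotone_rpow_of_nonneg hp.le) _ t

end MixedNorm

section UnitInterval

lemma exists_measure_lt_abs_le [IsFiniteMeasure μ] {g : α → ℝ} (hg : Measurable g) {ε : ℝ≥0∞}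
    (hε : 0 < ε) : ∃ σ : ℝ, 0 ≤ σ ∧ μ {x | σ < |g x|} ≤ ε := by
  have tail_tendsto := tendsto_measure_norm_gt_of_isTightMeasureSet
    (isTightMeasureSet_singleton (μ := μ.map g))
  simp only [mem_singleton_iff, iSup_iSup_eq_left, Real.norm_eq_abs] at tail_tendsto
  obtain ⟨σ, tail_lt, hσ⟩ :=
    ((tail_tendsto.eventually_lt_const hε).and (Filter.eventually_ge_atTop 0)).exists
  rw [Measure.map_apply hg (measurableSet_lt measurable_const measurable_abs)] at tail_lt
  exact ⟨σ, hσ, tail_lt.le⟩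

lemma decrRearr_le_ofReal_rearr {g : ℝ → ℝ} (hg : Measurable g) {t : ℝ} (ht : 0 < t) :
    decrRearr (volume.restrict (Icc 0 1)) (fun x => ENNReal.ofReal |g x|) t ≤
      ENNReal.ofReal (rearr g t) := by
  have volume_eq (σ : ℝ) :
      volume {x ∈ Icc (0 : ℝ) 1 | σ < |g x|} = volume.restrict (Icc 0 1) {x | σ < |g x|} := by
    rw [Measure.restrict_apply' measurableSet_Icc, inter_comm]; rfl
  simp only [rearr, volume_eq]
  set S := {σ : ℝ | 0 ≤ σ ∧ volume.restrict (Icc 0 1) {x | σ < |g x|} ≤ ENNReal.ofReal t}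
  have le_of_mem : ∀ σ ∈ S,
      decrRearr (volume.restrict (Icc 0 1)) (fun x => ENNReal.ofReal |g x|) t ≤ ENNReal.ofReal σ :=
    fun σ hσ => decrRearr_le_of_measure_lt_le <| by
      simpa only [ENNReal.ofReal_lt_ofReal_iff_of_nonneg hσ.1] using hσ.2
  obtain ⟨σ₀, hσ₀⟩ : S.Nonempty := exists_measure_lt_abs_le hg (ENNReal.ofReal_pos.2 ht)
  rw [ENNReal.le_ofReal_iff_toReal_le (ne_top_of_le_ne_top ENNReal.ofReal_ne_top (le_of_mem σ₀ hσ₀))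
    (Real.sInf_nonneg fun σ hσ => hσ.1)]
  exact le_csInf ⟨σ₀, hσ₀⟩ fun σ hσ => ENNReal.toReal_le_of_le_ofReal hσ.1 (le_of_mem σ hσ)

lemma lintegral_decrRearr_le_lintegral_rearr {p r : ℝ} (hp : 0 < p) (hr : 0 < r)
    {f : ℝ → β → ℝ} (hf : ∀ y, Measurable fun x => f x y) :
    ∫⁻ t in Ioi (0 : ℝ), (∫⁻ y, decrRearr (volume.restrict (Icc 0 1))
        (fun x => ENNReal.ofReal |f x y|) t ^ p ∂ν) ^ r ≤
      ∫⁻ t in Icc (0 : ℝ) 1, (∫⁻ y, ENNReal.ofReal (rearr (fun x => f x y) t) ^ p ∂ν) ^ r := by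
  set Φ : ℝ → ℝ≥0∞ := fun t => (∫⁻ y, decrRearr (volume.restrict (Icc 0 1))
    (fun x => ENNReal.ofReal |f x y|) t ^ p ∂ν) ^ r
  have support_subset : Φ.support ⊆ Iic 1 := fun t => by
    contrapose!
    intro (ht : ¬t ≤ 1)
    have total_mass_le : volume.restrict (Icc (0 : ℝ) 1) univ ≤ ENNReal.ofReal t := by
      simpa using (not_le.1 ht).le
    simp [Φ, decrRearr_eq_zero total_mass_le, hp, hr]
  calc ∫⁻ t in Ioi (0 : ℝ), Φ t
      = ∫⁻ t in Ioc (0 : ℝ) 1, Φ t := by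
        rw [← setLIntegral_eq_of_support_subset support_subset,
          Measure.restrict_restrict measurableSet_Iic, inter_comm, Ioi_inter_Iic]
    _ ≤ ∫⁻ t in Ioc (0 : ℝ) 1, (∫⁻ y, ENNReal.ofReal (rearr (fun x => f x y) t) ^ p ∂ν) ^ r := by
        refine setLIntegral_mono' measurableSet_Ioc fun t ht => ?_
        dsimp only [Φ]
        gcongr with y
        exact decrRearr_le_ofReal_rearr (hf y) ht.1
    _ ≤ ∫⁻ t in Icc (0 : ℝ) 1, (∫⁻ y, ENNReal.ofReal (rearr (fun x => f x y) t) ^ p ∂ν) ^ r :=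
        lintegral_mono_set Ioc_subset_Icc_self

end UnitInterval

/-- Minkowski-type inequality (part b): for `0 < p ≤ q < ∞`,
`(∫₀¹(∫₀¹ |f(x₁,x₂)|^p dx₂)^{q/p} dx₁)^{1/q}
  ≤ (∫₀¹(∫₀¹ (f^{*₁}(t₁,x₂))^p dx₂)^{q/p} dt₁)^{1/q}`. -/
theorem stmt_3 (p q : ℝ) (hp : 0 < p) (hpq : p ≤ q)
    (f : ℝ → ℝ → ℝ) (hf : Measurable (Function.uncurry f)) :
    (∫⁻ x₁ in Icc (0:ℝ) 1,
        (∫⁻ x₂ in Icc (0:ℝ) 1, ENNReal.ofReal |f x₁ x₂| ^ p) ^ (q / p)) ^ (1 / q)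
      ≤ (∫⁻ t₁ in Icc (0:ℝ) 1,
        (∫⁻ x₂ in Icc (0:ℝ) 1, ENNReal.ofReal (rearr1 f t₁ x₂) ^ p) ^ (q / p)) ^ (1 / q) := by
  have hq : 0 < q := hp.trans_le hpq
  exact (stmt_3_general hp hpq hf.abs.ennreal_ofReal).trans <| ENNReal.rpow_le_rpow
    (lintegral_decrRearr_le_lintegral_rearr hp (div_pos hq hp) fun _ => hf.of_uncurry_right)
    (one_div_pos.2 hq).le
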